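/- Let k be a field of characteristic p > 2 and let a ∈ k ∖ k^p. Let S be the set of pairs (g₁, g₂) of p-polynomials in k[X,Y], each of degree strictly less than p² in the variable X, such that g₁^p − g₁ + a·g₂^p lies in the ideal of k[X,Y] generated by X^{p²} − X + a·Y^{p²}. Then the map sending (d,e) to the pair (d^p·X + d·X^p, e·X + d·Y^p) is a bijection from the set W(k) := {(d,e) ∈ k² : d = d^{p²} + a·e^p} onto S. -/

import Mathlib

open MvPolynomial

/-- A `p`-polynomial over a field `k` is a polynomial in `k[X,Y]` that is a `k`-linear
combination of the monomials `X ^ p ^ j` and `Y ^ p ^ j`. -/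
def IsPPolynomial {k : Type*} [CommRing k] (p : ℕ) {n : ℕ}
    (F : MvPolynomial (Fin n) k) : Prop :=
  F ∈ Submodule.span k {g : MvPolynomial (Fin n) k | ∃ i : Fin n, ∃ j : ℕ, g = X i ^ p ^ j}

theorem coeff_single_pow_eq_zero_of_degreeOf_lt {k σ : Type*} [CommRing k] {p : ℕ} (hp : 1 < p)
    {F : MvPolynomial σ k} {i : σ} {r j : ℕ} (hF : F.degreeOf i < p ^ r) (hj : r ≤ j) :
    coeff (Finsupp.single i (p ^ j)) F = 0 := by
  by_contra h
  have := monomial_le_degreeOf i (mem_support_iff.2 h)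
  rw [Finsupp.single_eq_same] at this
  exact absurd (Nat.pow_le_pow_right hp.le hj) (by lia)

theorem coeff_single_pow_X_pow_pow {k σ : Type*} [CommRing k] [DecidableEq σ] {p : ℕ}
    (hp : 1 < p) (i l : σ) (r j : ℕ) :
    coeff (Finsupp.single i (p ^ j)) (X l ^ p ^ r : MvPolynomial σ k) =
      if l = i ∧ r = j then 1 else 0 := by
  have hpos (s : ℕ) : p ^ s ≠ 0 := pow_ne_zero _ (by lia)
  simp only [coeff_X_pow, Finsupp.single_eq_single_iff, hpos, Nat.pow_right_inj hp,
    and_false, or_false]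

namespace IsPPolynomial

variable {k : Type*} [CommRing k] {p n : ℕ} {F G : MvPolynomial (Fin n) k}

theorem X_pow (i : Fin n) (j : ℕ) : IsPPolynomial p (X i ^ p ^ j : MvPolynomial (Fin n) k) :=
  Submodule.subset_span ⟨i, j, rfl⟩

theorem X_self (i : Fin n) : IsPPolynomial p (X i : MvPolynomial (Fin n) k) := by
  simpa using X_pow (k := k) (p := p) i 0

theorem add (hF : IsPPolynomial p F) (hG : IsPPolynomial p G) : IsPPolynomial p (F + G) :=
  Submodule.add_mem _ hF hG

theorem sub (hF : IsPPolynomial p F) (hG : IsPPolynomial p G) : IsPPolynomial p (F - G) :=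
  Submodule.sub_mem _ hF hG

theorem C_mul (c : k) (hF : IsPPolynomial p F) : IsPPolynomial p (C c * F) := by
  rw [C_mul']
  exact Submodule.smul_mem _ c hF

/-- Only the monomials `X i ^ p ^ j` occur in a `p`-polynomial. -/
theorem exists_eq_single (hF : IsPPolynomial p F) {m : Fin n →₀ ℕ} (hm : coeff m F ≠ 0) :
    ∃ i j, m = Finsupp.single i (p ^ j) := by
  contrapose! hm
  induction hF using Submodule.span_induction with
  | mem x hx =>
    obtain ⟨i, j, rfl⟩ := hx
    rw [coeff_X_pow, if_neg (hm i j).symm]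
  | zero => simp
  | add x y _ _ hx hy => simp [hx, hy]
  | smul c x _ hx => simp [hx]

theorem eq_zero (hF : IsPPolynomial p F)
    (h : ∀ i j, coeff (Finsupp.single i (p ^ j)) F = 0) : F = 0 := by
  ext m
  by_contra hm
  obtain ⟨i, j, rfl⟩ := hF.exists_eq_single hm
  exact hm (h i j)

/-- The Frobenius of a `p`-polynomial is the `p`-polynomial whose coefficients are raised to the
`p`-th power and shifted by one place. -/
theorem pow_char [Fact p.Prime] [CharP k p] (hF : IsPPolynomial p F) :
    IsPPolynomial p (F ^ p) ∧
      (∀ i, coeff (Finsupp.single i 1) (F ^ p) = 0) ∧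
      ∀ i j, coeff (Finsupp.single i (p ^ (j + 1))) (F ^ p) =
        coeff (Finsupp.single i (p ^ j)) F ^ p := by
  have hp : p.Prime := Fact.out
  induction hF using Submodule.span_induction with
  | mem x hx =>
    obtain ⟨i, j, rfl⟩ := hx
    rw [← pow_mul, ← pow_succ]
    refine ⟨X_pow i _, fun l => ?_, fun l m => ?_⟩
    · simpa using coeff_single_pow_X_pow_pow (k := k) hp.one_lt l i (j + 1) 0
    · simp only [coeff_single_pow_X_pow_pow hp.one_lt, add_left_inj]
      split_ifs <;> simp [hp.ne_zero]
  | zero =>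
    rw [zero_pow hp.ne_zero]
    exact ⟨Submodule.zero_mem _, by simp, by simp [hp.ne_zero]⟩
  | add x y _ _ hx hy =>
    rw [add_pow_char]
    refine ⟨hx.1.add hy.1, fun i => ?_, fun i j => ?_⟩
    · rw [coeff_add, hx.2.1, hy.2.1, add_zero]
    · rw [coeff_add, coeff_add, hx.2.2, hy.2.2, add_pow_char]
  | smul c x _ hx =>
    rw [smul_pow]
    refine ⟨Submodule.smul_mem _ _ hx.1, fun i => ?_, fun i j => ?_⟩
    · rw [coeff_smul, hx.2.1, smul_zero]
    · rw [coeff_smul, coeff_smul, hx.2.2, smul_pow]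

theorem degreeOf_lt (hp : 1 < p) (hF : IsPPolynomial p F) {i : Fin n} {r : ℕ}
    (h : ∀ j, r ≤ j → coeff (Finsupp.single i (p ^ j)) F = 0) : F.degreeOf i < p ^ r := by
  rw [degreeOf_lt_iff (by positivity)]
  intro m hm
  obtain ⟨l, j, rfl⟩ := hF.exists_eq_single (mem_support_iff.1 hm)
  obtain rfl | hl := eq_or_ne l i
  · rw [Finsupp.single_eq_same]
    refine Nat.pow_lt_pow_right hp ?_
    by_contra! hj
    exact mem_support_iff.1 hm (h j hj)
  · rw [Finsupp.single_eq_of_ne' hl]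
    positivity

end IsPPolynomial

/-- If `a` is not a `p`-th power, then `1, a, a ^ 2` are linearly independent over the subfield of
`p`-th powers. -/
theorem eq_zero_of_pow_add_mul_pow_add_sq_mul_pow {k : Type*} [Field k] {p : ℕ} [CharP k p]
    [hp' : Fact p.Prime] (hp : 2 < p) {a : k} (ha : ∀ b : k, b ^ p ≠ a) {u v w : k}
    (h : u ^ p + a * v ^ p + a ^ 2 * w ^ p = 0) : u = 0 ∧ v = 0 ∧ w = 0 := by
  have hirr : Irreducible (Polynomial.X ^ p - Polynomial.C a : Polynomial k) :=
    X_pow_sub_C_irreducible_of_prime hp'.out ha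
  obtain ⟨b, hb⟩ := IsAlgClosed.exists_pow_nat_eq (algebraMap k (AlgebraicClosure k) a)
    hp'.out.pos
  have hmin : Polynomial.X ^ p - Polynomial.C a = minpoly k b := by
    refine minpoly.eq_of_irreducible_of_monic hirr (by simp [hb]) ?_
    exact Polynomial.monic_X_pow_sub_C a hp'.out.ne_zero
  have : CharP (AlgebraicClosure k) p := charP_of_injective_algebraMap' k p
  let f : Polynomial k :=
    Polynomial.C w * Polynomial.X ^ 2 + Polynomial.C v * Polynomial.X + Polynomial.C u
  have hroot : Polynomial.aeval b f = 0 := by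
    apply eq_zero_of_pow_eq_zero (n := p)
    have := congrArg (algebraMap k (AlgebraicClosure k)) h
    simp only [map_add, map_mul, map_pow, map_zero, ← hb] at this
    simp only [f, map_add, map_mul, map_pow, Polynomial.aeval_C, Polynomial.aeval_X,
      add_pow_char, mul_pow]
    rw [← this]
    ring
  have hf : f = 0 := by
    by_contra hf
    have h1 := Polynomial.natDegree_le_of_dvd (hmin ▸ minpoly.dvd k b hroot) hf
    rw [Polynomial.natDegree_X_pow_sub_C] at h1
    have : f.natDegree ≤ 2 := Polynomial.natDegree_quadratic_le
    lia
  refine ⟨?_, ?_, ?_⟩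
  · simpa [f] using congrArg (Polynomial.coeff · 0) hf
  · simpa [f, Polynomial.coeff_X, Polynomial.coeff_C] using congrArg (Polynomial.coeff · 1) hf
  · simpa [f, Polynomial.coeff_X, Polynomial.coeff_C] using congrArg (Polynomial.coeff · 2) hf

section Hom

variable {k : Type*} [Field k] {p : ℕ}

theorem isPPolynomial_X_pow_sub_X_add (a : k) :
    IsPPolynomial p (X 0 ^ p ^ 2 - X 0 + C a * X 1 ^ p ^ 2 : MvPolynomial (Fin 2) k) :=
  ((IsPPolynomial.X_pow 0 2).sub (IsPPolynomial.X_self 0)).add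
    (IsPPolynomial.C_mul a (IsPPolynomial.X_pow 1 2))

theorem coeff_single_pow_X_pow_sub_X_add (hp : 1 < p) (a : k) (i : Fin 2) (j : ℕ) :
    coeff (Finsupp.single i (p ^ j))
        (X 0 ^ p ^ 2 - X 0 + C a * X 1 ^ p ^ 2 : MvPolynomial (Fin 2) k) =
      (if 0 = i ∧ 2 = j then 1 else 0) - (if 0 = i ∧ 0 = j then 1 else 0) +
        a * (if 1 = i ∧ 2 = j then 1 else 0) := by
  have h0 := coeff_single_pow_X_pow_pow (k := k) hp i 0 0 j
  rw [pow_zero, pow_one] at h0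
  simp only [coeff_add, coeff_sub, coeff_C_mul, h0, coeff_single_pow_X_pow_pow hp]

theorem eq_zero_of_mem_span_of_degreeOf_lt (hp : 1 < p) {a : k} {R : MvPolynomial (Fin 2) k}
    (hR : R.degreeOf 0 < p ^ 2)
    (h : R ∈ Ideal.span {(X 0 ^ p ^ 2 - X 0 + C a * X 1 ^ p ^ 2 : MvPolynomial (Fin 2) k)}) :
    R = 0 := by
  obtain ⟨Q, rfl⟩ := Ideal.mem_span_singleton.1 h
  have hcoeff := coeff_single_pow_X_pow_sub_X_add hp a 0 2
  simp only [true_and, if_true, OfNat.zero_ne_ofNat, if_false, one_ne_zero, false_and, mul_zero,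
    sub_zero, add_zero] at hcoeff
  have hdeg := monomial_le_degreeOf 0 (mem_support_iff.2 (hcoeff.trans_ne one_ne_zero))
  rw [Finsupp.single_eq_same] at hdeg
  by_contra hne
  rw [degreeOf_mul_eq (left_ne_zero_of_mul hne) (right_ne_zero_of_mul hne)] at hR
  lia

/-- The equations satisfied by the coefficients of a pair `(g₁, g₂)` of `p`-polynomials defining
a homomorphism from `X ^ p ^ 2 - X + a * Y ^ p ^ 2 = 0` to `X ^ p - X + a * Y ^ p = 0`. -/
theorem coeff_relations [Fact p.Prime] [CharP k p] {a : k} {g₁ g₂ : MvPolynomial (Fin 2) k}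
    (h₁ : IsPPolynomial p g₁) (h₂ : IsPPolynomial p g₂)
    (d₁ : g₁.degreeOf 0 < p ^ 2) (d₂ : g₂.degreeOf 0 < p ^ 2)
    (h : g₁ ^ p - g₁ + C a * g₂ ^ p ∈
      Ideal.span {(X 0 ^ p ^ 2 - X 0 + C a * X 1 ^ p ^ 2 : MvPolynomial (Fin 2) k)})
    (A B : Fin 2 → ℕ → k) (hA : ∀ i j, coeff (Finsupp.single i (p ^ j)) g₁ = A i j)
    (hB : ∀ i j, coeff (Finsupp.single i (p ^ j)) g₂ = B i j) :
    A 0 0 = A 0 1 ^ p + a * B 0 1 ^ p ∧ A 1 0 = 0 ∧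
      A 0 1 = A 0 0 ^ p + a * B 0 0 ^ p ∧
      ∀ j, A 1 (j + 1) = A 1 j ^ p + a * B 1 j ^ p -
        if j = 1 then a * (A 0 1 ^ p + a * B 0 1 ^ p) else 0 := by
  have hp : p.Prime := Fact.out
  set m := A 0 1 ^ p + a * B 0 1 ^ p with hm
  set P : MvPolynomial (Fin 2) k := X 0 ^ p ^ 2 - X 0 + C a * X 1 ^ p ^ 2 with hP
  have hPcoeff := coeff_single_pow_X_pow_sub_X_add hp.one_lt a
  rw [← hP] at hPcoeff
  obtain ⟨hF₁, hF₁z, hF₁s⟩ := h₁.pow_char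
  obtain ⟨hF₂, hF₂z, hF₂s⟩ := h₂.pow_char
  set R := g₁ ^ p - g₁ + C a * g₂ ^ p - C m * P with hR
  have hRp : IsPPolynomial p R :=
    ((hF₁.sub h₁).add (hF₂.C_mul a)).sub ((isPPolynomial_X_pow_sub_X_add a).C_mul m)
  have hRz (i) : coeff (Finsupp.single i (p ^ 0)) R =
      -A i 0 + m * (if 0 = i then 1 else 0) := by
    rw [hR, coeff_sub, coeff_C_mul, hPcoeff, coeff_add, coeff_sub, coeff_C_mul, hA]
    simp [hF₁z, hF₂z]
  have hRs (i j) : coeff (Finsupp.single i (p ^ (j + 1))) R =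
      A i j ^ p - A i (j + 1) + a * B i j ^ p -
        m * ((if 0 = i ∧ 1 = j then 1 else 0) + a * (if 1 = i ∧ 1 = j then 1 else 0)) := by
    rw [hR, coeff_sub, coeff_C_mul, hPcoeff, coeff_add, coeff_sub, coeff_C_mul, hA, hF₁s, hF₂s,
      hA, hB]
    simp [eq_comm (a := 1) (b := j)]
  have hA0 (j) (hj : 2 ≤ j) : A 0 j = 0 :=
    (hA 0 j).symm.trans (coeff_single_pow_eq_zero_of_degreeOf_lt hp.one_lt d₁ hj)
  have hB0 (j) (hj : 2 ≤ j) : B 0 j = 0 :=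
    (hB 0 j).symm.trans (coeff_single_pow_eq_zero_of_degreeOf_lt hp.one_lt d₂ hj)
  have hRdeg : R.degreeOf 0 < p ^ 2 := by
    refine hRp.degreeOf_lt hp.one_lt fun j hj => ?_
    obtain ⟨j, rfl⟩ : ∃ l, j = l + 1 := ⟨j - 1, by lia⟩
    rw [hRs, hA0 (j + 1) hj]
    obtain rfl | hj1 := eq_or_ne j 1
    · simp [hm]
    · rw [hA0 j (by lia), hB0 j (by lia)]
      simp [hp.ne_zero, hj1.symm]
  have hR0 : R = 0 := eq_zero_of_mem_span_of_degreeOf_lt hp.one_lt hRdeg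
    (Ideal.sub_mem _ h (Ideal.mul_mem_left _ _ (Ideal.mem_span_singleton_self _)))
  rw [hR0] at hRz hRs
  simp only [coeff_zero] at hRz hRs
  refine ⟨?_, ?_, ?_, fun j => ?_⟩
  · simpa [neg_add_eq_zero] using (hRz 0).symm
  · simpa using hRz 1
  · have := hRs 0 0
    simp only [one_ne_zero, and_false, if_false] at this
    linear_combination this
  · have := hRs 1 j
    simp only [zero_ne_one, true_and, false_and, if_false, eq_comm (a := 1)] at this
    split_ifs at this ⊢ <;> linear_combination this

/-- If `a` is not a `p`-th power, finitely supported sequences `c`, `d` that satisfy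
`c (j + 1) = c j ^ p + a * d j ^ p` from the index `r` on vanish from `r` on. -/
theorem eq_zero_of_recursion [Fact p.Prime] [CharP k p] {a : k} (ha : ∀ b : k, b ^ p ≠ a)
    {c d : ℕ → k} {N r : ℕ} (hN : ∀ j, N ≤ j → c j = 0 ∧ d j = 0)
    (h : ∀ j, r ≤ j → c (j + 1) = c j ^ p + a * d j ^ p) (j : ℕ) (hj : r ≤ j) :
    c j = 0 ∧ d j = 0 := by
  have hp : p ≠ 0 := (Fact.out : p.Prime).ne_zero
  obtain hj' | hj' := le_total N j
  · exact hN j hj'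
  induction hj' using Nat.decreasingInduction with
  | self => exact hN N le_rfl
  | of_succ j _ ih =>
    have hrec := h j hj
    rw [(ih (by lia)).1] at hrec
    have hd : d j = 0 := by
      by_contra hd
      refine ha (-c j / d j) ?_
      rw [div_pow, div_eq_iff (pow_ne_zero _ hd), ← zero_sub, sub_pow_char, zero_pow hp]
      linear_combination hrec
    refine ⟨?_, hd⟩
    rw [hd, zero_pow hp, mul_zero, add_zero] at hrec
    exact eq_zero_of_pow_eq_zero hrec.symm

end Hom

/-- **Computation of the Hom scheme `Hom(V, U)⁺` for `p > 2` on `k`-points.**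
Let `k` be a field of characteristic `p > 2` and `a ∈ k ∖ kᵖ`.  The set `S` of pairs
`(g₁, g₂)` of `p`-polynomials in `k[X,Y]` of `X`-degree `< p²` with
`g₁^p - g₁ + a g₂^p ∈ (X^{p²} - X + a Y^{p²})` (the homomorphisms `V → U` in normal form)
is in bijection with `W(k) = {(d,e) : d = d^{p²} + a e^p}` via
`(d, e) ↦ (dᵖ·X + d·Xᵖ, e·X + d·Yᵖ)`. -/
theorem homScheme_V_to_U_eq_W {k : Type*} [Field k] (p : ℕ) [CharP k p] (hp : 2 < p)
    (a : k) (ha : ∀ b : k, b ^ p ≠ a) :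
    Set.BijOn
      (fun de : k × k =>
        ((C (de.1 ^ p) * X 0 + C de.1 * X 0 ^ p : MvPolynomial (Fin 2) k),
         (C de.2 * X 0 + C de.1 * X 1 ^ p : MvPolynomial (Fin 2) k)))
      {de : k × k | de.1 = de.1 ^ p ^ 2 + a * de.2 ^ p}
      {g : MvPolynomial (Fin 2) k × MvPolynomial (Fin 2) k |
        IsPPolynomial p g.1 ∧ IsPPolynomial p g.2 ∧
        g.1.degreeOf 0 < p ^ 2 ∧ g.2.degreeOf 0 < p ^ 2 ∧
        g.1 ^ p - g.1 + C a * g.2 ^ p ∈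
          Ideal.span {(X 0 ^ p ^ 2 - X 0 + C a * X 1 ^ p ^ 2 : MvPolynomial (Fin 2) k)}} := by
  have hprime : p.Prime := (CharP.char_is_prime_or_zero k p).resolve_right (by lia)
  have : Fact p.Prime := ⟨hprime⟩
  have h1 := hprime.one_lt
  have hX0 (i : Fin 2) (j : ℕ) := coeff_single_pow_X_pow_pow (k := k) h1 i 0 0 j
  have hX1 (i l : Fin 2) (j : ℕ) := coeff_single_pow_X_pow_pow (k := k) h1 i l 1 j
  simp only [pow_zero, pow_one] at hX0 hX1
  have hXp (l : Fin 2) : IsPPolynomial p (X l ^ p : MvPolynomial (Fin 2) k) := by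
    simpa using IsPPolynomial.X_pow (k := k) (p := p) l 1
  have hF (u v : k) : IsPPolynomial p (C u * X 0 + C v * X 0 ^ p : MvPolynomial (Fin 2) k) :=
    ((IsPPolynomial.X_self 0).C_mul u).add ((hXp 0).C_mul v)
  have hG (u v : k) : IsPPolynomial p (C u * X 0 + C v * X 1 ^ p : MvPolynomial (Fin 2) k) :=
    ((IsPPolynomial.X_self 0).C_mul u).add ((hXp 1).C_mul v)
  have hFc (u v : k) (i : Fin 2) (j : ℕ) : coeff (Finsupp.single i (p ^ j))
      (C u * X 0 + C v * X 0 ^ p : MvPolynomial (Fin 2) k) =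
      u * (if 0 = i ∧ 0 = j then 1 else 0) + v * (if 0 = i ∧ 1 = j then 1 else 0) := by
    rw [coeff_add, coeff_C_mul, coeff_C_mul, hX0, hX1]
  have hGc (u v : k) (i : Fin 2) (j : ℕ) : coeff (Finsupp.single i (p ^ j))
      (C u * X 0 + C v * X 1 ^ p : MvPolynomial (Fin 2) k) =
      u * (if 0 = i ∧ 0 = j then 1 else 0) + v * (if 1 = i ∧ 1 = j then 1 else 0) := by
    rw [coeff_add, coeff_C_mul, coeff_C_mul, hX0, hX1]
  refine ⟨?_, ?_, ?_⟩
  · rintro ⟨d, e⟩ (hde : d = d ^ p ^ 2 + a * e ^ p)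
    refine ⟨hF _ _, hG _ _, ?_, ?_, ?_⟩
    · refine (hF _ _).degreeOf_lt h1 fun j hj => ?_
      rw [hFc]
      simp [show 0 ≠ j by lia, show 1 ≠ j by lia]
    · refine (hG _ _).degreeOf_lt h1 fun j hj => ?_
      rw [hGc]
      simp [show 0 ≠ j by lia]
    · refine Ideal.mem_span_singleton.2 ⟨C (d ^ p), ?_⟩
      have hC := congrArg (C (σ := Fin 2)) hde
      simp only [map_add, map_mul, map_pow] at hC
      simp only [add_pow_char, mul_pow, map_pow, ← pow_mul, ← sq]
      linear_combination -X 0 ^ p * hC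
  · rintro ⟨d, e⟩ _ ⟨d', e'⟩ _ h
    obtain ⟨h₁, h₂⟩ := Prod.ext_iff.1 h
    have hd := congrArg (coeff (Finsupp.single 0 (p ^ 1))) h₁
    have he := congrArg (coeff (Finsupp.single 0 (p ^ 0))) h₂
    simp only [hFc] at hd
    simp only [hGc] at he
    exact Prod.ext (by simpa using hd) (by simpa using he)
  · rintro ⟨g₁, g₂⟩ ⟨h₁, h₂, d₁, d₂, h⟩
    let A (i : Fin 2) (j : ℕ) := coeff (Finsupp.single i (p ^ j)) g₁
    let B (i : Fin 2) (j : ℕ) := coeff (Finsupp.single i (p ^ j)) g₂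
    obtain ⟨r₁, r₂, r₃, r₄⟩ := coeff_relations h₁ h₂ d₁ d₂ h A B (fun _ _ => rfl) fun _ _ => rfl
    have hA0 (j) (hj : 2 ≤ j) : A 0 j = 0 := coeff_single_pow_eq_zero_of_degreeOf_lt h1 d₁ hj
    have hB0 (j) (hj : 2 ≤ j) : B 0 j = 0 := coeff_single_pow_eq_zero_of_degreeOf_lt h1 d₂ hj
    have hlarge (j) (hj : max (g₁.degreeOf 1) (g₂.degreeOf 1) ≤ j) : A 1 j = 0 ∧ B 1 j = 0 :=
      ⟨coeff_single_pow_eq_zero_of_degreeOf_lt h1 (Nat.lt_pow_self h1) (le_of_max_le_left hj),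
        coeff_single_pow_eq_zero_of_degreeOf_lt h1 (Nat.lt_pow_self h1) (le_of_max_le_right hj)⟩
    have hAB := eq_zero_of_recursion (r := 2) ha hlarge fun j hj => by
      rw [r₄, if_neg (by lia), sub_zero]
    have r₄0 := r₄ 0
    have r₄1 := r₄ 1
    rw [if_neg zero_ne_one, r₂, zero_pow hprime.ne_zero, zero_add, sub_zero, zero_add] at r₄0
    rw [if_pos rfl, (hAB 2 le_rfl).1] at r₄1
    obtain ⟨hA11, hB11, hB01⟩ := eq_zero_of_pow_add_mul_pow_add_sq_mul_pow hp ha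
      (u := A 1 1) (v := B 1 1 - A 0 1) (w := -B 0 1) (by
        rw [sub_pow_char, ← zero_sub (B 0 1), sub_pow_char, zero_pow hprime.ne_zero]
        linear_combination -r₄1)
    rw [neg_eq_zero] at hB01
    rw [sub_eq_zero] at hB11
    have hB10 : B 1 0 = 0 := by
      have ha0 : a ≠ 0 := fun h0 => ha 0 (by rw [h0, zero_pow hprime.ne_zero])
      rw [hA11] at r₄0
      exact eq_zero_of_pow_eq_zero ((mul_eq_zero.1 r₄0.symm).resolve_left ha0)
    rw [hB01, zero_pow hprime.ne_zero, mul_zero, add_zero] at r₁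
    refine ⟨(A 0 1, B 0 0), ?_, Prod.ext ?_ ?_⟩
    · change A 0 1 = A 0 1 ^ p ^ 2 + a * B 0 0 ^ p
      rw [sq, pow_mul, ← r₁]
      exact r₃
    · refine sub_eq_zero.1 (((hF _ _).sub h₁).eq_zero fun i j => ?_)
      rw [coeff_sub, hFc, sub_eq_zero]
      change _ = A i j
      match i, j with
      | 0, 0 => simp [r₁]
      | 0, 1 => simp
      | 0, j + 2 => simp [hA0]
      | 1, 0 => simp [r₂]
      | 1, 1 => simp [hA11]
      | 1, j + 2 => simp [(hAB (j + 2) (by lia)).1]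
    · refine sub_eq_zero.1 (((hG _ _).sub h₂).eq_zero fun i j => ?_)
      rw [coeff_sub, hGc, sub_eq_zero]
      change _ = B i j
      match i, j with
      | 0, 0 => simp
      | 0, 1 => simp [hB01]
      | 0, j + 2 => simp [hB0]
      | 1, 0 => simp [hB10]
      | 1, 1 => simp [hB11]
      | 1, j + 2 => simp [(hAB (j + 2) (by lia)).2]
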